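/- arXiv:2403.08168 — 3 statements merged into one kernel-verified Lean document; each statement's English description precedes it below -/
import Mathlib

section
/- Let Δ > 0 and let τ be uniformly distributed on [-Δ/2, Δ/2]. Then for every a ∈ ℝ, the expectation of the floor satisfies E_τ[⌊(a+τ)/Δ⌋] = a/Δ - 1/2. -/
open MeasureTheory

/-- The uniform probability measure on the interval `[-Δ/2, Δ/2]`. -/
noncomputable def uniformDither (Δ : ℝ) : Measure ℝ :=
  (ENNReal.ofReal Δ)⁻¹ • volume.restrict (Set.Icc (-(Δ / 2)) (Δ / 2))

/-!
The change of variables `u = (a + τ) / Δ` makes `u` uniform on an interval of length one centred at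
`a / Δ`, of mean `a / Δ`. Since `⌊u⌋ = u - fract u` and `fract` has mean `1 / 2` over each of its
periods, `⌊u⌋` has mean `a / Δ - 1 / 2`.
-/

theorem intervalIntegrable_floor (μ : Measure ℝ) [IsLocallyFiniteMeasure μ] (a b : ℝ) :
    IntervalIntegrable (fun u : ℝ ↦ (⌊u⌋ : ℝ)) μ a b :=
  (Int.cast_mono.comp Int.floor_mono).intervalIntegrable

theorem intervalIntegrable_fract (μ : Measure ℝ) [IsLocallyFiniteMeasure μ] (a b : ℝ) :
    IntervalIntegrable (Int.fract : ℝ → ℝ) μ a b :=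
  intervalIntegral.intervalIntegrable_id.sub (intervalIntegrable_floor μ a b)

theorem integral_fract_zero_one : ∫ u in (0 : ℝ)..1, Int.fract u = 1 / 2 := by
  have fract_eq_id : Set.EqOn (Int.fract : ℝ → ℝ) id (Set.Ioo 0 1) := fun u hu ↦
    Int.fract_eq_self.2 ⟨hu.1.le, hu.2⟩
  calc
    ∫ u in (0 : ℝ)..1, Int.fract u = ∫ u in (0 : ℝ)..1, u :=
      intervalIntegral.integral_congr_Ioo_of_le zero_le_one fract_eq_id
    _ = 1 / 2 := by norm_num [integral_id]

theorem integral_fract_add_one (c : ℝ) : ∫ u in c..c + 1, Int.fract u = 1 / 2 := by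
  have fract_periodic : Function.Periodic (Int.fract : ℝ → ℝ) 1 := Int.fract_add_one
  rw [fract_periodic.intervalIntegral_add_eq c 0, zero_add, integral_fract_zero_one]

theorem integral_floor_add_one (c : ℝ) : ∫ u in c..c + 1, (⌊u⌋ : ℝ) = c := by
  calc
    ∫ u in c..c + 1, (⌊u⌋ : ℝ) = ∫ u in c..c + 1, (u - Int.fract u) := by
      simp only [Int.self_sub_fract]
    _ = (∫ u in c..c + 1, u) - ∫ u in c..c + 1, Int.fract u :=
      intervalIntegral.integral_sub intervalIntegral.intervalIntegrable_id
        (intervalIntegrable_fract volume _ _)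
    _ = ((c + 1) ^ 2 - c ^ 2) / 2 - 1 / 2 := by rw [integral_id, integral_fract_add_one]
    _ = c := by ring

section Dither

variable {E : Type*} [NormedAddCommGroup E] [NormedSpace ℝ E] {Δ : ℝ}

theorem integral_uniformDither (hΔ : 0 ≤ Δ) (f : ℝ → E) :
    ∫ τ, f τ ∂uniformDither Δ = Δ⁻¹ • ∫ τ in -(Δ / 2)..Δ / 2, f τ := by
  rw [uniformDither, integral_smul_measure, integral_Icc_eq_integral_Ioc,
    ← intervalIntegral.integral_of_le (by linarith), ENNReal.toReal_inv, ENNReal.toReal_ofReal hΔ]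

theorem integral_comp_add_div_uniformDither (hΔ : 0 < Δ) (a : ℝ) (f : ℝ → E) :
    ∫ τ, f ((a + τ) / Δ) ∂uniformDither Δ = ∫ u in (a / Δ - 1 / 2)..(a / Δ + 1 / 2), f u := by
  have half_div : Δ / 2 / Δ = 1 / 2 := by field_simp
  simp_rw [add_div]
  rw [integral_uniformDither hΔ.le, intervalIntegral.inv_smul_integral_comp_add_div, neg_div,
    half_div, ← sub_eq_add_neg]

end Dither

/-- For `τ` uniform on `[-Δ/2, Δ/2]`, `E_τ[⌊(a+τ)/Δ⌋] = a/Δ - 1/2`. -/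
theorem floor_dither_expectation (Δ : ℝ) (hΔ : 0 < Δ) (a : ℝ) :
    ∫ τ, ((⌊(a + τ) / Δ⌋ : ℤ) : ℝ) ∂(uniformDither Δ) = a / Δ - 1 / 2 := by
  have endpoint : a / Δ + 1 / 2 = a / Δ - 1 / 2 + 1 := by ring
  rw [integral_comp_add_div_uniformDither hΔ a fun u ↦ (⌊u⌋ : ℝ), endpoint, integral_floor_add_one]
end

section
/- Let Δ > 0 and let τ be uniformly distributed on [-Δ/2, Δ/2]. Then for all a, b ∈ ℝ with |a| ≤ Δ/2 and |b| ≤ Δ/2, E_τ[(Δ/2)·|sgn(a+τ) - sgn(b+τ)|] = |a - b|. -/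
open MeasureTheory

/-! `|sgn (a + τ) - sgn (b + τ)|` equals `2` when the threshold `-τ` separates `a` from `b` and `0`
otherwise, up to the two values of `τ` at which a sign vanishes. Its expectation is therefore
twice the probability that `τ` lies between `-a` and `-b`, and the factor `Δ / 2` cancels the
density `1 / Δ`. -/

lemma abs_sign_add_sub_sign_add_eq_indicator {a b τ : ℝ} (ha : τ ≠ -a) (hb : τ ≠ -b) :
    |Real.sign (a + τ) - Real.sign (b + τ)| =
      (Set.uIoc (-a) (-b)).indicator (fun _ ↦ 2) τ := by
  rcases ha.lt_or_gt with hτa | haτ <;> rcases hb.lt_or_gt with hτb | hbτ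
  · have hτ : τ ∉ Set.uIoc (-a) (-b) := Set.notMem_uIoc.mpr (.inl ⟨hτa.le, hτb.le⟩)
    rw [Real.sign_of_neg (by linarith), Real.sign_of_neg (by linarith),
      Set.indicator_of_notMem hτ, sub_self, abs_zero]
  · have hτ : τ ∈ Set.uIoc (-a) (-b) := Set.mem_uIoc.mpr (.inr ⟨hbτ, hτa.le⟩)
    rw [Real.sign_of_neg (by linarith), Real.sign_of_pos (by linarith),
      Set.indicator_of_mem hτ]
    norm_num
  · have hτ : τ ∈ Set.uIoc (-a) (-b) := Set.mem_uIoc.mpr (.inl ⟨haτ, hτb.le⟩)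
    rw [Real.sign_of_pos (by linarith), Real.sign_of_neg (by linarith),
      Set.indicator_of_mem hτ]
    norm_num
  · have hτ : τ ∉ Set.uIoc (-a) (-b) := Set.notMem_uIoc.mpr (.inr ⟨hbτ, haτ⟩)
    rw [Real.sign_of_pos (by linarith), Real.sign_of_pos (by linarith),
      Set.indicator_of_notMem hτ, sub_self, abs_zero]

lemma integral_abs_sign_add_sub_sign_add (μ : Measure ℝ) [NullSingletonClass μ] (a b : ℝ) :
    ∫ τ, |Real.sign (a + τ) - Real.sign (b + τ)| ∂μ = 2 * μ.real (Set.uIoc (-a) (-b)) := by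
  have h_ae : (fun τ ↦ |Real.sign (a + τ) - Real.sign (b + τ)|) =ᵐ[μ]
      (Set.uIoc (-a) (-b)).indicator fun _ ↦ 2 := by
    filter_upwards [Measure.ae_ne μ (-a), Measure.ae_ne μ (-b)] with τ ha hb
    exact abs_sign_add_sub_sign_add_eq_indicator ha hb
  rw [integral_congr_ae h_ae, integral_indicator_const _ measurableSet_uIoc, smul_eq_mul,
    mul_comm]

namespace uniformDither

variable {Δ : ℝ}

instance instNullSingletonClass : NullSingletonClass (uniformDither Δ) where
  measure_singleton x := by
    rw [uniformDither, Measure.smul_apply, measure_singleton, smul_zero]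

lemma real_of_subset (hΔ : 0 ≤ Δ) {s : Set ℝ} (hs : s ⊆ Set.Icc (-(Δ / 2)) (Δ / 2)) :
    (uniformDither Δ).real s = volume.real s / Δ := by
  rw [uniformDither, measureReal_ennreal_smul_apply, ENNReal.toReal_inv,
    ENNReal.toReal_ofReal hΔ, Measure.real, Measure.restrict_eq_self _ hs, ← Measure.real,
    inv_mul_eq_div]

lemma real_uIoc {x y : ℝ} (hx : |x| ≤ Δ / 2) (hy : |y| ≤ Δ / 2) :
    (uniformDither Δ).real (Set.uIoc x y) = |y - x| / Δ := by
  have hΔ : 0 ≤ Δ := by linarith [abs_nonneg x]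
  have h_subset : Set.uIoc x y ⊆ Set.Icc (-(Δ / 2)) (Δ / 2) :=
    Set.uIoc_subset_uIcc.trans (Set.uIcc_subset_Icc (abs_le.mp hx) (abs_le.mp hy))
  rw [real_of_subset hΔ h_subset, Measure.real, Real.volume_uIoc,
    ENNReal.toReal_ofReal (abs_nonneg _)]

end uniformDither

/-- For `τ` uniform on `[-Δ/2, Δ/2]` and `|a|, |b| ≤ Δ/2`,
`E_τ[(Δ/2)·|sgn(a+τ) - sgn(b+τ)|] = |a - b|`. -/
theorem one_bit_l1_isometry (Δ : ℝ) (hΔ : 0 < Δ) (a b : ℝ)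
    (ha : |a| ≤ Δ / 2) (hb : |b| ≤ Δ / 2) :
    ∫ τ, Δ / 2 * |Real.sign (a + τ) - Real.sign (b + τ)| ∂(uniformDither Δ) = |a - b| := by
  have h_prob : (uniformDither Δ).real (Set.uIoc (-a) (-b)) = |a - b| / Δ := by
    rw [uniformDither.real_uIoc (by rwa [abs_neg]) (by rwa [abs_neg]), neg_sub_neg]
  rw [integral_const_mul, integral_abs_sign_add_sub_sign_add, h_prob]
  field_simp
end

section
/- Let Δ > 0, let X, Y be real n₁×n₂ matrices with all entries of X and of Y bounded in absolute value by Δ/2. Let (i₁,j₁),…,(i_{m'},j_{m'}) be i.i.d. indices uniformly distributed on [n₁]×[n₂] and τ₁,…,τ_{m'} be i.i.d. uniform on [-Δ/2, Δ/2], independent of the indices. Then for every ε > 0, P( | (1/m') Σ_{k=1}^{m'} (Δ/2)·|sgn(X_{i_k,j_k} + τ_k) - sgn(Y_{i_k,j_k} + τ_k)| − (1/(n₁n₂)) ‖X - Y‖₁ | ≥ ε ) ≤ 2 exp( −2 ε² m' / Δ² ). -/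
open MeasureTheory ProbabilityTheory

/-- The uniform probability measure on the finite index set `Fin n₁ × Fin n₂`. -/
noncomputable def uniformIndex (n₁ n₂ : ℕ) : Measure (Fin n₁ × Fin n₂) :=
  ((n₁ * n₂ : ℕ) : ENNReal)⁻¹ • Measure.count

/-- The entrywise ℓ₁-norm of a real matrix. -/
noncomputable def matL1 {n₁ n₂ : ℕ} (X : Matrix (Fin n₁) (Fin n₂) ℝ) : ℝ :=
  ∑ i, ∑ j, |X i j|

/-!
For a dither `t` uniform on `[-Δ/2, Δ/2]`, the signs of `x + t` and `y + t` disagree exactly when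
`-t` falls between `x` and `y`, an event of probability `|x - y| / Δ`. Hence
`(Δ/2) |sgn (x + t) - sgn (y + t)|`, which takes values in `[0, Δ]`, has mean `|x - y|`; averaging
over a random index gives the normalised `ℓ₁` distance, and Hoeffding's inequality for variables in
an interval of length `Δ` yields the concentration bound. The law of the index may be arbitrary.
-/

section Hoeffding

variable {Ω : Type*} [MeasurableSpace Ω] {P : Measure Ω}

theorem measureReal_le_abs_le_of_hasSubgaussianMGF {Z : Ω → ℝ} {c : NNReal}
    (hZ : HasSubgaussianMGF Z c P) {ε : ℝ} (hε : 0 ≤ ε) :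
    P.real {ω | ε ≤ |Z ω|} ≤ 2 * Real.exp (-ε ^ 2 / (2 * c)) := by
  calc P.real {ω | ε ≤ |Z ω|}
      = P.real ({ω | ε ≤ Z ω} ∪ {ω | ε ≤ (-Z) ω}) := by
        simp only [le_abs, Set.ofPred_or, Pi.neg_apply]
    _ ≤ P.real {ω | ε ≤ Z ω} + P.real {ω | ε ≤ (-Z) ω} := measureReal_union_le _ _
    _ ≤ 2 * Real.exp (-ε ^ 2 / (2 * c)) := by
        rw [two_mul (Real.exp _)]
        exact add_le_add (hZ.measure_ge_le hε) (hZ.neg.measure_ge_le hε)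

variable [IsProbabilityMeasure P] {ι : Type*} {Z : ι → Ω → ℝ}

theorem measureReal_le_abs_sum_sub_integral_le (h_indep : iIndepFun Z P) {s : Finset ι}
    {a b : ι → ℝ} (hZ : ∀ i ∈ s, AEMeasurable (Z i) P)
    (hab : ∀ i ∈ s, ∀ᵐ ω ∂P, Z i ω ∈ Set.Icc (a i) (b i)) {ε : ℝ} (hε : 0 ≤ ε) :
    P.real {ω | ε ≤ |∑ i ∈ s, (Z i ω - P[Z i])|} ≤
      2 * Real.exp (-(2 * ε ^ 2) / ∑ i ∈ s, (b i - a i) ^ 2) := by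
  have h_centered : iIndepFun (fun i ω ↦ Z i ω - P[Z i]) P :=
    h_indep.comp (fun i z ↦ z - ∫ ω, Z i ω ∂P) fun _ ↦ measurable_id.sub_const _
  have h_sum := HasSubgaussianMGF.sum_of_iIndepFun h_centered fun i hi ↦
    hasSubgaussianMGF_of_mem_Icc (hZ i hi) (hab i hi)
  convert measureReal_le_abs_le_of_hasSubgaussianMGF h_sum hε using 3
  simp only [NNReal.coe_sum, NNReal.coe_pow, NNReal.coe_div, coe_nnnorm, Real.norm_eq_abs,
    NNReal.coe_ofNat, div_pow, sq_abs, ← Finset.sum_div]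
  field_simp

theorem measureReal_le_abs_mean_sub_le [Fintype ι] (h_indep : iIndepFun Z P) {a b c : ℝ}
    (hZ : ∀ i, AEMeasurable (Z i) P) (hab : ∀ i, ∀ᵐ ω ∂P, Z i ω ∈ Set.Icc a b)
    (hc : ∀ i, P[Z i] = c) {ε : ℝ} (hε : 0 ≤ ε) :
    P.real {ω | ε ≤ |(Fintype.card ι : ℝ)⁻¹ * ∑ i, Z i ω - c|} ≤
      2 * Real.exp (-(2 * ε ^ 2 * Fintype.card ι) / (b - a) ^ 2) := by
  rcases isEmpty_or_nonempty ι with _ | _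
  · simpa using measureReal_le_one.trans one_le_two
  have h_card : (0 : ℝ) < Fintype.card ι := by exact_mod_cast Fintype.card_pos
  have h_event (ω : Ω) : ε ≤ |(Fintype.card ι : ℝ)⁻¹ * ∑ i, Z i ω - c| ↔
      Fintype.card ι * ε ≤ |∑ i, (Z i ω - P[Z i])| := by
    have h_mean : (Fintype.card ι : ℝ)⁻¹ * ∑ i, Z i ω - c =
        (∑ i, (Z i ω - P[Z i])) / Fintype.card ι := by
      simp only [hc, Finset.sum_sub_distrib, Finset.sum_const, Finset.card_univ, nsmul_eq_mul]
      field_simp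
    rw [h_mean, abs_div, abs_of_pos h_card, le_div_iff₀' h_card]
  simp only [h_event]
  convert measureReal_le_abs_sum_sub_integral_le h_indep (fun i _ ↦ hZ i) (fun i _ ↦ hab i)
    (mul_nonneg h_card.le hε) using 3
  simp only [Finset.sum_const, Finset.card_univ, nsmul_eq_mul]
  field_simp

end Hoeffding

theorem uniformDither_eq_cond (Δ : ℝ) :
    uniformDither Δ = volume[|Set.Icc (-(Δ / 2)) (Δ / 2)] := by
  rw [uniformDither, ProbabilityTheory.cond, Real.volume_Icc, sub_neg_eq_add, add_halves]

theorem isProbabilityMeasure_uniformDither {Δ : ℝ} (hΔ : 0 < Δ) :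
    IsProbabilityMeasure (uniformDither Δ) := by
  rw [uniformDither_eq_cond]
  exact cond_isProbabilityMeasure_of_finite (by simpa using hΔ) (by simp)

theorem uniformDither_real_uIoc {Δ x y : ℝ} (hΔ : 0 < Δ) (hx : |x| ≤ Δ / 2)
    (hy : |y| ≤ Δ / 2) :
    (uniformDither Δ).real (Set.uIoc x y) = |y - x| / Δ := by
  have h_subset : Set.uIoc x y ⊆ Set.Icc (-(Δ / 2)) (Δ / 2) :=
    Set.uIoc_subset_uIcc.trans (Set.uIcc_subset_Icc (abs_le.mp hx) (abs_le.mp hy))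
  rw [uniformDither, measureReal_ennreal_smul_apply, measureReal_restrict_apply measurableSet_uIoc,
    Set.inter_eq_left.mpr h_subset, measureReal_def, Real.volume_uIoc, ENNReal.toReal_inv,
    ENNReal.toReal_ofReal hΔ.le, ENNReal.toReal_ofReal (abs_nonneg _), inv_mul_eq_div]

/-- The distance between the one-bit quantizations of `x` and `y` with common dither `t`, scaled
by `Δ / 2` so that it is an unbiased estimate of `|x - y|` when `t` has law `uniformDither Δ`. -/
noncomputable def oneBitDist (Δ x y t : ℝ) : ℝ :=
  Δ / 2 * |Real.sign (x + t) - Real.sign (y + t)|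

theorem measurable_real_sign : Measurable Real.sign :=
  Measurable.ite measurableSet_Iio measurable_const
    (Measurable.ite measurableSet_Ioi measurable_const measurable_const)

theorem aemeasurable_oneBitDist {α : Type*} [MeasurableSpace α] {μ : Measure α} (Δ : ℝ)
    {f g h : α → ℝ} (hf : AEMeasurable f μ) (hg : AEMeasurable g μ) (hh : AEMeasurable h μ) :
    AEMeasurable (fun a ↦ oneBitDist Δ (f a) (g a) (h a)) μ :=
  ((measurable_real_sign.comp_aemeasurable (hf.add hh)).sub
    (measurable_real_sign.comp_aemeasurable (hg.add hh))).abs.const_mul _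

theorem abs_sign_le_one (r : ℝ) : |Real.sign r| ≤ 1 := by
  rcases Real.sign_apply_eq r with h | h | h <;> simp [h]

theorem oneBitDist_mem_Icc {Δ : ℝ} (hΔ : 0 ≤ Δ) (x y t : ℝ) :
    oneBitDist Δ x y t ∈ Set.Icc 0 Δ := by
  refine ⟨by unfold oneBitDist; positivity, ?_⟩
  calc oneBitDist Δ x y t
      ≤ Δ / 2 * (|Real.sign (x + t)| + |Real.sign (y + t)|) := by
        unfold oneBitDist; gcongr; exact abs_sub _ _
    _ ≤ Δ / 2 * (1 + 1) := by gcongr <;> exact abs_sign_le_one _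
    _ = Δ := by ring

theorem abs_sign_sub_sign_of_ne_zero {a b : ℝ} (ha : a ≠ 0) (hb : b ≠ 0) :
    |Real.sign a - Real.sign b| = if 0 < a ↔ 0 < b then 0 else 2 := by
  rcases ha.lt_or_gt with ha | ha <;> rcases hb.lt_or_gt with hb | hb <;>
    norm_num [Real.sign_of_neg, Real.sign_of_pos, ha, hb, ha.not_gt, hb.not_gt]

theorem oneBitDist_ae_eq_indicator (Δ x y : ℝ) :
    oneBitDist Δ x y =ᵐ[volume] (Set.uIoc (-x) (-y)).indicator fun _ ↦ Δ := by
  filter_upwards [volume.ae_ne (-x), volume.ae_ne (-y)] with t hx hy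
  have hx' : x + t ≠ 0 := fun h ↦ hx (eq_neg_of_add_eq_zero_right h)
  have hy' : y + t ≠ 0 := fun h ↦ hy (eq_neg_of_add_eq_zero_right h)
  have h_mem : t ∈ Set.uIoc (-x) (-y) ↔ ¬(0 < x + t ↔ 0 < y + t) := by
    rw [Set.mem_uIoc]
    grind
  by_cases h : 0 < x + t ↔ 0 < y + t <;>
    simp [oneBitDist, abs_sign_sub_sign_of_ne_zero hx' hy', h_mem, h]

theorem integral_oneBitDist {Δ x y : ℝ} (hΔ : 0 < Δ) (hx : |x| ≤ Δ / 2) (hy : |y| ≤ Δ / 2) :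
    ∫ t, oneBitDist Δ x y t ∂uniformDither Δ = |x - y| := by
  have h_ac : uniformDither Δ ≪ volume := by
    rw [uniformDither_eq_cond]
    exact cond_absolutelyContinuous
  calc ∫ t, oneBitDist Δ x y t ∂uniformDither Δ
      = ∫ t, (Set.uIoc (-x) (-y)).indicator (fun _ ↦ Δ) t ∂uniformDither Δ :=
        integral_congr_ae (h_ac.ae_eq (oneBitDist_ae_eq_indicator Δ x y))
    _ = (uniformDither Δ).real (Set.uIoc (-x) (-y)) * Δ := by
        rw [integral_indicator_const _ measurableSet_uIoc, smul_eq_mul]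
    _ = |x - y| := by
        rw [uniformDither_real_uIoc hΔ (by rwa [abs_neg]) (by rwa [abs_neg]),
          div_mul_cancel₀ _ hΔ.ne', neg_sub_neg]

theorem integral_prod_oneBitDist {I : Type*} [MeasurableSpace I] {ν : Measure I}
    [IsFiniteMeasure ν] {Δ : ℝ} (hΔ : 0 < Δ) {x y : I → ℝ} (hx : AEMeasurable x ν)
    (hy : AEMeasurable y ν) (hxΔ : ∀ᵐ i ∂ν, |x i| ≤ Δ / 2) (hyΔ : ∀ᵐ i ∂ν, |y i| ≤ Δ / 2) :
    ∫ w, oneBitDist Δ (x w.1) (y w.1) w.2 ∂ν.prod (uniformDither Δ) = ∫ i, |x i - y i| ∂ν := by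
  have := isProbabilityMeasure_uniformDither hΔ
  rw [integral_prod _ (Integrable.of_mem_Icc 0 Δ
    (aemeasurable_oneBitDist Δ hx.comp_fst hy.comp_fst measurable_snd.aemeasurable)
    (ae_of_all _ fun _ ↦ oneBitDist_mem_Icc hΔ.le _ _ _))]
  refine integral_congr_ae ?_
  filter_upwards [hxΔ, hyΔ] with i hxi hyi using integral_oneBitDist hΔ hxi hyi

theorem uniformIndex_eq_uniformOn (n₁ n₂ : ℕ) : uniformIndex n₁ n₂ = uniformOn Set.univ := by
  simp [uniformIndex, uniformOn, ProbabilityTheory.cond, Measure.count_univ]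

theorem isProbabilityMeasure_uniformIndex {n₁ n₂ : ℕ} (hn₁ : 0 < n₁) (hn₂ : 0 < n₂) :
    IsProbabilityMeasure (uniformIndex n₁ n₂) := by
  have := Fin.pos_iff_nonempty.mp hn₁
  have := Fin.pos_iff_nonempty.mp hn₂
  rw [uniformIndex_eq_uniformOn]
  infer_instance

theorem integral_abs_uniformIndex {n₁ n₂ : ℕ} (X : Matrix (Fin n₁) (Fin n₂) ℝ) :
    ∫ p, |X p.1 p.2| ∂uniformIndex n₁ n₂ = ((n₁ : ℝ) * n₂)⁻¹ * matL1 X := by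
  rw [uniformIndex, integral_smul_measure, integral_fintype .of_finite]
  simp [matL1, Fintype.sum_prod_type]

theorem sampled_one_bit_l1_concentration_general {I : Type*} [MeasurableSpace I] {ν : Measure I}
    [IsProbabilityMeasure ν] {Δ : ℝ} (hΔ : 0 < Δ) {x y : I → ℝ} (hx : AEMeasurable x ν)
    (hy : AEMeasurable y ν) (hxΔ : ∀ᵐ i ∂ν, |x i| ≤ Δ / 2) (hyΔ : ∀ᵐ i ∂ν, |y i| ≤ Δ / 2)
    {Ω : Type*} [MeasurableSpace Ω] {P : Measure Ω} [IsProbabilityMeasure P]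
    {κ : Type*} [Fintype κ] {W : κ → Ω → I × ℝ} (h_indep : iIndepFun W P)
    (h_law : ∀ k, HasLaw (W k) (ν.prod (uniformDither Δ)) P) {ε : ℝ} (hε : 0 ≤ ε) :
    P.real {ω | ε ≤ |(Fintype.card κ : ℝ)⁻¹ *
          (∑ k, oneBitDist Δ (x (W k ω).1) (y (W k ω).1) (W k ω).2) - ∫ i, |x i - y i| ∂ν|} ≤
      2 * Real.exp (-(2 * ε ^ 2 * Fintype.card κ) / Δ ^ 2) := by
  have := isProbabilityMeasure_uniformDither hΔ
  let g : I × ℝ → ℝ := fun w ↦ oneBitDist Δ (x w.1) (y w.1) w.2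
  have hg : AEMeasurable g (ν.prod (uniformDither Δ)) :=
    aemeasurable_oneBitDist Δ hx.comp_fst hy.comp_fst measurable_snd.aemeasurable
  have hg_map (k : κ) : AEMeasurable g (P.map (W k)) := (h_law k).map_eq ▸ hg
  have h_mean (k : κ) : P[g ∘ W k] = ∫ i, |x i - y i| ∂ν := by
    rw [(h_law k).integral_comp hg.aestronglyMeasurable,
      integral_prod_oneBitDist hΔ hx hy hxΔ hyΔ]
  simpa using measureReal_le_abs_mean_sub_le (Z := fun k ↦ g ∘ W k)
    (h_indep.comp₀ (fun _ ↦ g) (fun k ↦ (h_law k).aemeasurable) hg_map)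
    (fun k ↦ (hg_map k).comp_aemeasurable (h_law k).aemeasurable)
    (fun k ↦ ae_of_all _ fun ω ↦ oneBitDist_mem_Icc hΔ.le _ _ _) h_mean hε

/-- Hoeffding-type concentration of the sampled one-bit distance: for matrices with
entries bounded by `Δ/2`, with i.i.d. uniform indices and i.i.d. uniform dithers
independent of the indices (encoded by the i.i.d. family `W k = ((i_k,j_k), τ_k)` with
product distribution), for every `ε > 0`,
`P(|(1/m')Σ_k (Δ/2)|sgn(X+τ) - sgn(Y+τ)| - ‖X-Y‖₁/(n₁n₂)| ≥ ε) ≤ 2 exp(-2ε²m'/Δ²)`. -/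
theorem sampled_one_bit_l1_concentration {n₁ n₂ m' : ℕ} (hn₁ : 0 < n₁) (hn₂ : 0 < n₂)
    (Δ : ℝ) (hΔ : 0 < Δ)
    (X Y : Matrix (Fin n₁) (Fin n₂) ℝ)
    (hX : ∀ i j, |X i j| ≤ Δ / 2) (hY : ∀ i j, |Y i j| ≤ Δ / 2)
    {Ω : Type*} [MeasurableSpace Ω] (P : Measure Ω) [IsProbabilityMeasure P]
    (W : Fin m' → Ω → (Fin n₁ × Fin n₂) × ℝ)
    (hmeas : ∀ k, Measurable (W k))
    (hindep : iIndepFun W P)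
    (hdist : ∀ k, Measure.map (W k) P = (uniformIndex n₁ n₂).prod (uniformDither Δ))
    (ε : ℝ) (hε : 0 < ε) :
    P {ω | ε ≤ |(m' : ℝ)⁻¹ * (∑ k : Fin m',
          Δ / 2 * |Real.sign (X (W k ω).1.1 (W k ω).1.2 + (W k ω).2)
            - Real.sign (Y (W k ω).1.1 (W k ω).1.2 + (W k ω).2)|)
        - ((n₁ : ℝ) * n₂)⁻¹ * matL1 (X - Y)|}
      ≤ ENNReal.ofReal (2 * Real.exp (-(2 * ε ^ 2 * m') / Δ ^ 2)) := by
  have := isProbabilityMeasure_uniformIndex hn₁ hn₂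
  rw [← integral_abs_uniformIndex, ← ofReal_measureReal]
  refine ENNReal.ofReal_le_ofReal ?_
  simpa [oneBitDist] using sampled_one_bit_l1_concentration_general hΔ
    (x := fun p ↦ X p.1 p.2) (y := fun p ↦ Y p.1 p.2) (ν := uniformIndex n₁ n₂)
    Measurable.of_discrete.aemeasurable Measurable.of_discrete.aemeasurable
    (ae_of_all _ fun p ↦ hX p.1 p.2) (ae_of_all _ fun p ↦ hY p.1 p.2) hindep
    (fun k ↦ ⟨(hmeas k).aemeasurable, hdist k⟩) hε.le
end
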